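/- arXiv:1412.4198 — 2 statements merged into one kernel-verified Lean document; each statement's English description precedes it below -/
import Mathlib

section
/- Let A be a finite two-player zero-sum game with row set R and column set C whose payoff entries are pairwise distinct, i.e., a_{r,c} = a_{r',c'} implies (r,c) = (r',c'). Then A contains a unique weak saddle. -/
/-!
Since the entries are pairwise distinct, weak domination of a row (column) by a different one is
strict domination, so weak GSPs behave like strict ones. The theorem follows by showing that weak
GSPs are closed under intersection: a minimal weak GSP is then unique, and one exists by finiteness.

*The intersection is nonempty* (`IsWeakGSP.inter_rows_nonempty`). Let `R₁ × C₁` and `R₂ × C₂` be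
weak GSPs. Choose `f : R → R₁`, `u : C → C₁` and `g : R → R₂`, `k : C → C₂` sending each strategy
to a dominating one. For `r ∈ R₂` and `c ∈ C₂`,
`a r (k (u c)) ≤ a r (u c) ≤ a (f r) (u c) ≤ a (f r) c ≤ a (g (f r)) c`,
and the second step is strict if `R₁` and `R₂` are disjoint. Iterating the maps `g ∘ f` and `k ∘ u`
from a pair that is periodic for both with a common period gives `a r c < a r c`. The
statement for columns is the same one for the transposed game `-aᵀ`.

*The intersection dominates* (`IsWeakGSP.inter_rowsWeaklyDominate`). Fix `c₀ ∈ C₁ ∩ C₂`. Among the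
rows dominating `r` on `C₁ ∩ C₂`, the one with the largest entry in column `c₀` lies in both `R₁`
and `R₂`, for otherwise it would be strictly dominated by a better one.
-/

/-- `R1` weakly dominates the set of rows `R2` with respect to the columns `C'`:
every row in `R2` is weakly dominated by some row in `R1`. -/
def RowsWeaklyDominate {R C : Type*} (a : R → C → ℝ) (C' : Finset C)
    (R1 R2 : Finset R) : Prop :=
  ∀ r2 ∈ R2, ∃ r1 ∈ R1, ∀ c ∈ C', a r2 c ≤ a r1 c

/-- `C1` weakly dominates the set of columns `C2` with respect to the rows `R'`. -/
def ColsWeaklyDominate {R C : Type*} (a : R → C → ℝ) (R' : Finset R)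
    (C1 C2 : Finset C) : Prop :=
  ∀ c2 ∈ C2, ∃ c1 ∈ C1, ∀ r ∈ R', a r c1 ≤ a r c2

/-- `R' × C'` is a weak generalized saddle point of the game `a`: `R'` and `C'` are
nonempty, `R'` weakly dominates `R \ R'` w.r.t. `C'`, and `C'` weakly dominates
`C \ C'` w.r.t. `R'`. -/
def IsWeakGSP {R C : Type*} [Fintype R] [Fintype C] [DecidableEq R] [DecidableEq C]
    (a : R → C → ℝ) (R' : Finset R) (C' : Finset C) : Prop :=
  R'.Nonempty ∧ C'.Nonempty ∧
  RowsWeaklyDominate a C' R' (Finset.univ \ R') ∧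
  ColsWeaklyDominate a R' C' (Finset.univ \ C')

/-- `R' × C'` is a weak saddle: a weak GSP none of whose proper (nonempty) subproducts
is a weak GSP. -/
def IsWeakSaddle {R C : Type*} [Fintype R] [Fintype C] [DecidableEq R] [DecidableEq C]
    (a : R → C → ℝ) (R' : Finset R) (C' : Finset C) : Prop :=
  IsWeakGSP a R' C' ∧
  ∀ R'' C'', R'' ⊆ R' → C'' ⊆ C' → IsWeakGSP a R'' C'' → R'' = R' ∧ C'' = C'

/-- Self-maps `φ`, `ψ` of finite types preserving nonempty sets `S`, `T` cannot satisfy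
`a r (ψ c) < a (φ r) c` throughout `S × T`. -/
lemma not_forall_shift_lt {R C : Type*} [Finite R] [Finite C] (a : R → C → ℝ)
    (S : Finset R) (T : Finset C) (hS : S.Nonempty) (hT : T.Nonempty)
    (φ : R → R) (ψ : C → C) (hφ : ∀ r ∈ S, φ r ∈ S) (hψ : ∀ c ∈ T, ψ c ∈ T)
    (h : ∀ r ∈ S, ∀ c ∈ T, a r (ψ c) < a (φ r) c) : False := by
  have hφi : ∀ n : ℕ, ∀ r ∈ S, φ^[n] r ∈ S := by
    intro n
    induction n with
    | zero => simp
    | succ n ih => intro r hr; exact ih _ (hφ r hr)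
  have hψi : ∀ n : ℕ, ∀ c ∈ T, ψ^[n] c ∈ T := by
    intro n
    induction n with
    | zero => simp
    | succ n ih => intro c hc; exact ih _ (hψ c hc)
  have hlt : ∀ n : ℕ, ∀ r ∈ S, ∀ c ∈ T, a r (ψ^[n + 1] c) < a (φ^[n + 1] r) c := by
    intro n
    induction n with
    | zero => simpa using h
    | succ n ih =>
      intro r hr c hc
      rw [Function.iterate_succ_apply' ψ, Function.iterate_succ_apply φ]
      exact (h r hr _ (hψi _ c hc)).trans (ih _ (hφ r hr) c hc)
  obtain ⟨r, hr⟩ := hS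
  obtain ⟨c, hc⟩ := hT
  obtain ⟨m, n, hmn, heq⟩ :=
    Finite.exists_ne_map_eq_of_infinite (fun n : ℕ => (φ^[n] r, ψ^[n] c))
  wlog hlt' : m < n generalizing m n
  · exact this n m hmn.symm heq.symm (by omega)
  obtain ⟨d, rfl⟩ := Nat.exists_eq_add_of_lt hlt'
  simp only [Prod.mk.injEq] at heq
  -- `φ^[m] r` and `ψ^[m] c` are periodic with common period `d + 1`.
  have key := hlt d _ (hφi m r hr) _ (hψi m c hc)
  rw [← Function.iterate_add_apply, ← Function.iterate_add_apply,
    show d + 1 + m = m + d + 1 by omega, ← heq.1, ← heq.2] at key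
  exact lt_irrefl _ key

section

variable {R C : Type*} [Fintype R] [Fintype C] [DecidableEq R] [DecidableEq C]
  {a : R → C → ℝ} {R₁ R₂ : Finset R} {C₁ C₂ : Finset C}

/-- Exchanging the players of a zero-sum game preserves weak GSPs. -/
lemma IsWeakGSP.transpose (h : IsWeakGSP a R₁ C₁) : IsWeakGSP (fun c r => -a r c) C₁ R₁ := by
  obtain ⟨hR, hC, hr, hc⟩ := h
  refine ⟨hC, hR, ?_, ?_⟩
  · intro c hcm
    obtain ⟨c', hc', hle⟩ := hc c hcm
    exact ⟨c', hc', fun r hr => neg_le_neg (hle r hr)⟩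
  · intro r hrm
    obtain ⟨r', hr', hle⟩ := hr r hrm
    exact ⟨r', hr', fun c hc => neg_le_neg (hle c hc)⟩

lemma IsWeakGSP.exists_row (h : IsWeakGSP a R₁ C₁) (r : R) :
    ∃ r' ∈ R₁, ∀ c ∈ C₁, a r c ≤ a r' c := by
  by_cases hr : r ∈ R₁
  · exact ⟨r, hr, fun _ _ => le_rfl⟩
  · exact h.2.2.1 r (by simp [hr])

lemma IsWeakGSP.exists_col (h : IsWeakGSP a R₁ C₁) (c : C) :
    ∃ c' ∈ C₁, ∀ r ∈ R₁, a r c' ≤ a r c := by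
  by_cases hc : c ∈ C₁
  · exact ⟨c, hc, fun _ _ => le_rfl⟩
  · exact h.2.2.2 c (by simp [hc])

lemma IsWeakGSP.inter_rows_nonempty
    (hdist : ∀ r r' : R, ∀ c c' : C, a r c = a r' c' → r = r' ∧ c = c')
    (h₁ : IsWeakGSP a R₁ C₁) (h₂ : IsWeakGSP a R₂ C₂) : (R₁ ∩ R₂).Nonempty := by
  by_contra hne
  rw [Finset.not_nonempty_iff_eq_empty, ← Finset.disjoint_iff_inter_eq_empty] at hne
  choose f hf hfa using h₁.exists_row
  choose g hg hga using h₂.exists_row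
  choose u hu hua using h₁.exists_col
  choose k hk hka using h₂.exists_col
  refine not_forall_shift_lt a R₂ C₂ h₂.1 h₂.2.1 (fun r => g (f r)) (fun c => k (u c))
    (fun r _ => hg _) (fun c _ => hk _) fun r hr c hc => ?_
  have hstrict : a r (u c) < a (f r) (u c) :=
    lt_of_le_of_ne (hfa r _ (hu c)) fun heq =>
      Finset.disjoint_left.mp hne (hf r) ((hdist _ _ _ _ heq).1 ▸ hr)
  calc a r (k (u c)) ≤ a r (u c) := hka _ r hr
    _ < a (f r) (u c) := hstrict
    _ ≤ a (f r) c := hua c _ (hf r)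
    _ ≤ a (g (f r)) c := hga _ c hc

lemma IsWeakGSP.inter_rowsWeaklyDominate
    (hdist : ∀ r r' : R, ∀ c c' : C, a r c = a r' c' → r = r' ∧ c = c')
    (h₁ : IsWeakGSP a R₁ C₁) (h₂ : IsWeakGSP a R₂ C₂) (hC : (C₁ ∩ C₂).Nonempty) (S : Finset R) :
    RowsWeaklyDominate a (C₁ ∩ C₂) (R₁ ∩ R₂) S := by
  intro r _
  obtain ⟨c₀, hc₀⟩ := hC
  have hc₀' := Finset.mem_inter.mp hc₀
  obtain ⟨s, hs, hmax⟩ := Set.exists_max_image {s | ∀ c ∈ C₁ ∩ C₂, a r c ≤ a s c}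
    (fun s => a s c₀) (Set.toFinite _) ⟨r, fun _ _ => le_rfl⟩
  -- A row dominating `s` on `C₁ ∩ C₂` equals `s`, by maximality and distinctness.
  have hfix : ∀ t, (∀ c ∈ C₁ ∩ C₂, a s c ≤ a t c) → t = s := fun t ht =>
    (hdist _ _ _ _ (le_antisymm (hmax t fun c hc => (hs c hc).trans (ht c hc)) (ht c₀ hc₀))).1
  obtain ⟨t₁, ht₁, hd₁⟩ := h₁.exists_row s
  obtain ⟨t₂, ht₂, hd₂⟩ := h₂.exists_row s
  have e₁ := hfix t₁ fun c hc => hd₁ c (Finset.mem_inter.mp hc).1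
  have e₂ := hfix t₂ fun c hc => hd₂ c (Finset.mem_inter.mp hc).2
  exact ⟨s, Finset.mem_inter.mpr ⟨e₁ ▸ ht₁, e₂ ▸ ht₂⟩, hs⟩

lemma IsWeakGSP.inter
    (hdist : ∀ r r' : R, ∀ c c' : C, a r c = a r' c' → r = r' ∧ c = c')
    (h₁ : IsWeakGSP a R₁ C₁) (h₂ : IsWeakGSP a R₂ C₂) : IsWeakGSP a (R₁ ∩ R₂) (C₁ ∩ C₂) := by
  have hdist' : ∀ c c' : C, ∀ r r' : R, -a r c = -a r' c' → c = c' ∧ r = r' :=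
    fun c c' r r' h => (hdist r r' c c' (neg_injective h)).symm
  have hR := h₁.inter_rows_nonempty hdist h₂
  have hC := h₁.transpose.inter_rows_nonempty hdist' h₂.transpose
  refine ⟨hR, hC, h₁.inter_rowsWeaklyDominate hdist h₂ hC _, fun c hc => ?_⟩
  obtain ⟨c', hc', hle⟩ :=
    h₁.transpose.inter_rowsWeaklyDominate hdist' h₂.transpose hR _ c hc
  exact ⟨c', hc', fun r hr => neg_le_neg_iff.mp (hle r hr)⟩

end

theorem distinct_entries_unique_weakSaddle
    {R C : Type*} [Fintype R] [Fintype C] [Nonempty R] [Nonempty C]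
    [DecidableEq R] [DecidableEq C]
    (a : R → C → ℝ)
    (hdist : ∀ r r' : R, ∀ c c' : C, a r c = a r' c' → r = r' ∧ c = c') :
    ∃! p : Finset R × Finset C, IsWeakSaddle a p.1 p.2 := by
  have huniv : IsWeakGSP a Finset.univ Finset.univ :=
    ⟨Finset.univ_nonempty, Finset.univ_nonempty, fun r hr => by simp at hr,
      fun c hc => by simp at hc⟩
  obtain ⟨p, hp⟩ := (Set.toFinite {p : Finset R × Finset C | IsWeakGSP a p.1 p.2}).exists_minimal
    ⟨(Finset.univ, Finset.univ), huniv⟩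
  refine ⟨p, ⟨hp.prop, fun R'' C'' hR hC h => ?_⟩, ?_⟩
  · have hle : p ≤ (R'', C'') := hp.le_of_le (y := (R'', C'')) h ⟨hR, hC⟩
    exact ⟨hR.antisymm hle.1, hC.antisymm hle.2⟩
  · rintro q ⟨hq, hqmin⟩
    have hi : IsWeakGSP a (p.1 ∩ q.1) (p.2 ∩ q.2) := IsWeakGSP.inter hdist hp.prop hq
    have e := hqmin _ _ Finset.inter_subset_right Finset.inter_subset_right hi
    have hle : p ≤ (p.1 ∩ q.1, p.2 ∩ q.2) :=
      hp.le_of_le (y := (p.1 ∩ q.1, p.2 ∩ q.2)) hi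
        ⟨Finset.inter_subset_left, Finset.inter_subset_left⟩
    rw [e.1, e.2] at hle
    exact Prod.ext ((Finset.inter_eq_right.mp e.1).antisymm hle.1)
      ((Finset.inter_eq_right.mp e.2).antisymm hle.2)
end

section
/- Let A be a finite two-player zero-sum game with row set R and column set C, and let R1 × C1 and R2 × C2 be weak saddles of A. Then the multiset of entries of the subgame A restricted to R1 × C1 equals the multiset of entries of the subgame A restricted to R2 × C2; in particular, Σ_{r∈R1, c∈C1} a_{r,c} = Σ_{r∈R2, c∈C2} a_{r,c}. -/
lemma exists_idempotent_pow {M : Type*} [Monoid M] [Finite M] (x : M) :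
    ∃ n, 0 < n ∧ x ^ n * x ^ n = x ^ n := by
  obtain ⟨i, j, hne, hij⟩ := Finite.exists_ne_map_eq_of_infinite (fun n : ℕ => x ^ n)
  wlog hlt : i < j generalizing i j
  · exact this j i hne.symm hij.symm (by omega)
  obtain ⟨p, rfl⟩ := Nat.exists_eq_add_of_lt hlt
  have hij' : x ^ i = x ^ (i + (p + 1)) := by simpa [add_assoc] using hij
  have step : ∀ k m, i ≤ m → x ^ (m + k * (p + 1)) = x ^ m := by
    intro k m hm
    obtain ⟨d, rfl⟩ := Nat.exists_eq_add_of_le hm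
    induction k with
    | zero => simp
    | succ k ih =>
      rw [show i + d + (k + 1) * (p + 1) = (i + (p + 1)) + (d + k * (p + 1)) by ring,
        pow_add, ← hij', ← pow_add, ← add_assoc, ih]
  -- The multiple `(i + 1) * (p + 1)` of the period exceeds the preperiod `i`.
  refine ⟨(i + 1) * (p + 1), by positivity, ?_⟩
  rw [← pow_add]
  exact step _ _ (by nlinarith)

section Saddles

variable {R C : Type*} [Fintype R] [Fintype C] [DecidableEq R] [DecidableEq C]
  {a : R → C → ℝ}

lemma IsWeakGSP.exists_row_map {R' : Finset R} {C' : Finset C} (h : IsWeakGSP a R' C') :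
    ∃ f : R → R, ∀ r, f r ∈ R' ∧ ∀ c ∈ C', a r c ≤ a (f r) c := by
  have key : ∀ r, ∃ s, s ∈ R' ∧ ∀ c ∈ C', a r c ≤ a s c := by
    intro r
    by_cases hr : r ∈ R'
    · exact ⟨r, hr, fun _ _ => le_rfl⟩
    · exact h.2.2.1 r (by simp [hr])
  exact Classical.skolem.mp key

lemma IsWeakGSP.exists_col_map {R' : Finset R} {C' : Finset C} (h : IsWeakGSP a R' C') :
    ∃ g : C → C, ∀ c, g c ∈ C' ∧ ∀ r ∈ R', a r (g c) ≤ a r c := by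
  have key : ∀ c, ∃ d, d ∈ C' ∧ ∀ r ∈ R', a r d ≤ a r c := by
    intro c
    by_cases hc : c ∈ C'
    · exact ⟨c, hc, fun _ _ => le_rfl⟩
    · exact h.2.2.2 c (by simp [hc])
  exact Classical.skolem.mp key

/-- The fixed product of idempotent maps with `a r (γ c) ≤ a (φ r) c` is a weak GSP, so by
minimality idempotent maps of this kind are the identity on a weak saddle. -/
lemma IsWeakSaddle.eq_self_of_idempotent {R' : Finset R} {C' : Finset C}
    (h : IsWeakSaddle a R' C') {φ : R → R} {γ : C → C}
    (hφ : ∀ r ∈ R', φ r ∈ R') (hγ : ∀ c ∈ C', γ c ∈ C')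
    (hle : ∀ r ∈ R', ∀ c ∈ C', a r (γ c) ≤ a (φ r) c)
    (hφφ : ∀ r, φ (φ r) = φ r) (hγγ : ∀ c, γ (γ c) = γ c) :
    (∀ r ∈ R', φ r = r) ∧ ∀ c ∈ C', γ c = c := by
  have hR : R'.image φ ⊆ R' := Finset.image_subset_iff.mpr hφ
  have hC : C'.image γ ⊆ C' := Finset.image_subset_iff.mpr hγ
  have hgsp : IsWeakGSP a (R'.image φ) (C'.image γ) := by
    refine ⟨h.1.1.image _, h.1.2.1.image _, ?_, ?_⟩
    · intro r _
      obtain ⟨f, hf⟩ := h.1.exists_row_map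
      refine ⟨φ (f r), Finset.mem_image_of_mem _ (hf r).1, fun c hc => ?_⟩
      have hcC := hC hc
      obtain ⟨d, _, rfl⟩ := Finset.mem_image.mp hc
      have h3 := hle (f r) (hf r).1 (γ d) hcC
      rw [hγγ] at h3
      exact ((hf r).2 _ hcC).trans h3
    · intro c _
      obtain ⟨g, hg⟩ := h.1.exists_col_map
      refine ⟨γ (g c), Finset.mem_image_of_mem _ (hg c).1, fun r hr => ?_⟩
      have hrR := hR hr
      obtain ⟨s, _, rfl⟩ := Finset.mem_image.mp hr
      have h3 := hle (φ s) hrR (g c) (hg c).1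
      rw [hφφ] at h3
      exact h3.trans ((hg c).2 _ hrR)
  obtain ⟨e1, e2⟩ := h.2 _ _ hR hC hgsp
  constructor
  · intro r hr
    rw [← e1] at hr
    obtain ⟨s, _, rfl⟩ := Finset.mem_image.mp hr
    exact hφφ s
  · intro c hc
    rw [← e2] at hc
    obtain ⟨d, _, rfl⟩ := Finset.mem_image.mp hc
    exact hγγ d

lemma IsWeakSaddle.injOn_of_le {R' : Finset R} {C' : Finset C}
    (h : IsWeakSaddle a R' C') {φ : R → R} {γ : C → C}
    (hφ : ∀ r ∈ R', φ r ∈ R') (hγ : ∀ c ∈ C', γ c ∈ C')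
    (hle : ∀ r ∈ R', ∀ c ∈ C', a r (γ c) ≤ a (φ r) c) :
    Set.InjOn φ R' ∧ Set.InjOn γ C' := by
  have hφn : ∀ n, ∀ r ∈ R', φ^[n] r ∈ R' := fun n =>
    (show Set.MapsTo φ R' R' from hφ).iterate n
  have hγn : ∀ n, ∀ c ∈ C', γ^[n] c ∈ C' := fun n =>
    (show Set.MapsTo γ C' C' from hγ).iterate n
  have hlen : ∀ n, ∀ r ∈ R', ∀ c ∈ C', a r (γ^[n] c) ≤ a (φ^[n] r) c := by
    intro n
    induction n with
    | zero => simp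
    | succ n ih =>
      intro r hr c hc
      rw [Function.iterate_succ_apply, Function.iterate_succ_apply']
      exact (ih r hr _ (hγ c hc)).trans (hle _ (hφn n r hr) c hc)
  -- One exponent serves both maps: take it in the product of the two transformation monoids.
  have : Finite (Function.End R × Function.End C) :=
    inferInstanceAs (Finite ((R → R) × (C → C)))
  obtain ⟨n, hn, hid⟩ := exists_idempotent_pow ((φ, γ) : Function.End R × Function.End C)
  have powR : ∀ n, (show Function.End R from φ) ^ n = φ^[n] := by
    intro n
    induction n with
    | zero => rfl
    | succ n ih => rw [pow_succ, ih, Function.iterate_succ]; rfl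
  have powC : ∀ n, (show Function.End C from γ) ^ n = γ^[n] := by
    intro n
    induction n with
    | zero => rfl
    | succ n ih => rw [pow_succ, ih, Function.iterate_succ]; rfl
  have idR : φ^[n] ∘ φ^[n] = φ^[n] := by
    have := congrArg Prod.fst hid
    rw [Prod.fst_mul, Prod.pow_fst] at this
    rw [← powR]; exact this
  have idC : γ^[n] ∘ γ^[n] = γ^[n] := by
    have := congrArg Prod.snd hid
    rw [Prod.snd_mul, Prod.pow_snd] at this
    rw [← powC]; exact this
  obtain ⟨fixR, fixC⟩ := h.eq_self_of_idempotent (hφn n) (hγn n) (hlen n)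
    (fun r => congrFun idR r) (fun c => congrFun idC c)
  obtain ⟨m, rfl⟩ := Nat.exists_eq_succ_of_ne_zero hn.ne'
  constructor
  · intro x hx y hy hxy
    rw [← fixR x hx, ← fixR y hy, Function.iterate_succ_apply, Function.iterate_succ_apply, hxy]
  · intro x hx y hy hxy
    rw [← fixC x hx, ← fixC y hy, Function.iterate_succ_apply, Function.iterate_succ_apply, hxy]

/-- A row map injecting the rows of the first saddle into those of the second, and a column map
injecting the columns of the second into those of the first. -/
lemma IsWeakSaddle.exists_injOn_maps {R1 R2 : Finset R} {C1 C2 : Finset C}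
    (h1 : IsWeakSaddle a R1 C1) (h2 : IsWeakSaddle a R2 C2) :
    ∃ (f : R → R) (g : C → C), (∀ r, f r ∈ R2) ∧ (∀ c, g c ∈ C1) ∧
      Set.InjOn f R1 ∧ Set.InjOn g C2 ∧
      ∀ r ∈ R1, ∀ c ∈ C2, a r (g c) ≤ a (f r) c := by
  obtain ⟨f₁, hf₁⟩ := h1.1.exists_row_map
  obtain ⟨g₁, hg₁⟩ := h1.1.exists_col_map
  obtain ⟨f₂, hf₂⟩ := h2.1.exists_row_map
  obtain ⟨g₂, hg₂⟩ := h2.1.exists_col_map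
  have le12 : ∀ r ∈ R1, ∀ c ∈ C2, a r (g₁ c) ≤ a (f₂ r) c := fun r hr c hc =>
    ((hg₁ c).2 r hr).trans ((hf₂ r).2 c hc)
  have le21 : ∀ r ∈ R2, ∀ c ∈ C1, a r (g₂ c) ≤ a (f₁ r) c := fun r hr c hc =>
    ((hg₂ c).2 r hr).trans ((hf₁ r).2 c hc)
  have inj1 := h1.injOn_of_le (φ := f₁ ∘ f₂) (γ := g₁ ∘ g₂)
    (fun r _ => (hf₁ _).1) (fun c _ => (hg₁ _).1)
    (fun r hr c hc => (le12 r hr _ (hg₂ c).1).trans (le21 _ (hf₂ r).1 c hc))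
  have inj2 := h2.injOn_of_le (φ := f₂ ∘ f₁) (γ := g₂ ∘ g₁)
    (fun r _ => (hf₂ _).1) (fun c _ => (hg₂ _).1)
    (fun r hr c hc => (le21 r hr _ (hg₁ c).1).trans (le12 _ (hf₁ r).1 c hc))
  refine ⟨f₂, g₁, fun r => (hf₂ r).1, fun c => (hg₁ c).1, ?_, ?_, le12⟩
  · intro x hx y hy hxy
    exact inj1.1 hx hy (congrArg f₁ hxy)
  · intro x hx y hy hxy
    exact inj2.2 hx hy (congrArg g₂ hxy)

lemma IsWeakSaddle.card_le {R1 R2 : Finset R} {C1 C2 : Finset C}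
    (h1 : IsWeakSaddle a R1 C1) (h2 : IsWeakSaddle a R2 C2) :
    R1.card ≤ R2.card ∧ C2.card ≤ C1.card := by
  obtain ⟨f, g, hf, hg, fi, gi, -⟩ := h1.exists_injOn_maps h2
  exact ⟨Finset.card_le_card_of_injOn f (fun r _ => hf r) fi,
    Finset.card_le_card_of_injOn g (fun c _ => hg c) gi⟩

/-- Both saddles are parametrized by the same index set `R1 × C2`, in such a way that each entry
of the first is at most the corresponding entry of the second. -/
lemma IsWeakSaddle.exists_common_param {R1 R2 : Finset R} {C1 C2 : Finset C}
    (h1 : IsWeakSaddle a R1 C1) (h2 : IsWeakSaddle a R2 C2) :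
    ∃ u v : R × C → ℝ, (∀ p ∈ R1 ×ˢ C2, u p ≤ v p) ∧
      (R1 ×ˢ C1).val.map (fun p => a p.1 p.2) = (R1 ×ˢ C2).val.map u ∧
      (R2 ×ˢ C2).val.map (fun p => a p.1 p.2) = (R1 ×ˢ C2).val.map v := by
  obtain ⟨f, g, hf, hg, fi, gi, hle⟩ := h1.exists_injOn_maps h2
  have hR : R1.image f = R2 := Finset.eq_of_subset_of_card_le
    (Finset.image_subset_iff.mpr fun r _ => hf r)
    (by rw [Finset.card_image_of_injOn fi]; exact (h2.card_le h1).1)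
  have hC : C2.image g = C1 := Finset.eq_of_subset_of_card_le
    (Finset.image_subset_iff.mpr fun c _ => hg c)
    (by rw [Finset.card_image_of_injOn gi]; exact (h2.card_le h1).2)
  refine ⟨fun p => a p.1 (g p.2), fun p => a (f p.1) p.2, ?_, ?_, ?_⟩
  · intro p hp
    exact hle _ (Finset.mem_product.mp hp).1 _ (Finset.mem_product.mp hp).2
  · have e : R1 ×ˢ C1 = (R1 ×ˢ C2).image (Prod.map id g) := by
      ext ⟨r, c⟩
      rw [← hC]
      simp [and_assoc]
    rw [e, Finset.image_val_of_injOn, Multiset.map_map]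
    · rfl
    · rw [Finset.coe_product]
      exact (Set.injOn_id _).prodMap gi
  · have e : R2 ×ˢ C2 = (R1 ×ˢ C2).image (Prod.map f id) := by
      ext ⟨r, c⟩
      rw [← hR]
      simp
      tauto
    rw [e, Finset.image_val_of_injOn, Multiset.map_map]
    · rfl
    · rw [Finset.coe_product]
      exact fi.prodMap (Set.injOn_id _)

lemma IsWeakSaddle.sum_le {R1 R2 : Finset R} {C1 C2 : Finset C}
    (h1 : IsWeakSaddle a R1 C1) (h2 : IsWeakSaddle a R2 C2) :
    ((R1 ×ˢ C1).val.map (fun p => a p.1 p.2)).sum ≤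
      ((R2 ×ˢ C2).val.map (fun p => a p.1 p.2)).sum := by
  obtain ⟨u, v, huv, e1, e2⟩ := h1.exists_common_param h2
  rw [e1, e2]
  exact Finset.sum_le_sum huv

end Saddles


theorem weakSaddle_entries_multiset_eq
    {R C : Type*} [Fintype R] [Fintype C] [Nonempty R] [Nonempty C]
    [DecidableEq R] [DecidableEq C]
    (a : R → C → ℝ) (R1 R2 : Finset R) (C1 C2 : Finset C)
    (h1 : IsWeakSaddle a R1 C1) (h2 : IsWeakSaddle a R2 C2) :
    (R1 ×ˢ C1).val.map (fun p => a p.1 p.2) =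
      (R2 ×ˢ C2).val.map (fun p => a p.1 p.2) ∧
    ∑ r ∈ R1, ∑ c ∈ C1, a r c = ∑ r ∈ R2, ∑ c ∈ C2, a r c := by
  have key : (R1 ×ˢ C1).val.map (fun p => a p.1 p.2) =
      (R2 ×ˢ C2).val.map (fun p => a p.1 p.2) := by
    have hsum := le_antisymm (h1.sum_le h2) (h2.sum_le h1)
    obtain ⟨u, v, huv, e1, e2⟩ := h1.exists_common_param h2
    rw [e1, e2] at hsum ⊢
    exact Multiset.map_congr rfl ((Finset.sum_eq_sum_iff_of_le huv).mp hsum)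
  refine ⟨key, ?_⟩
  rw [← Finset.sum_product', ← Finset.sum_product']
  exact congrArg Multiset.sum key
end
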